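/- arXiv:math/9812057 — 2 statements merged into one kernel-verified Lean document; each statement's English description precedes it below -/
import Mathlib

section
/- Let p be an odd prime, r an integer whose residue class generates (ℤ/p²)ˣ, u a unit of ℤ_(p), and n ≥ 2 an integer. Let F be the free ℤ_(p)-module on generators x, y, let N ⊆ F be the submodule generated by p^{n+p(p-1)}·y and p^n·x + u·p^{n-2}(p^{p(p-1)}-1)·y, and let Ψ be the ℤ_(p)-linear endomorphism of F with Ψ(x) = r^n·x + (u/p²)·r^n(r^{p(p-1)}-1)·y and Ψ(y) = r^{n+p(p-1)}·y. Then Ψ(N) ⊆ N, and if i is an integer with ν_p(i-p) ≥ p(p-1)+n and m = n + (p-1)i, the kernel of the induced endomorphism Ψ - r^m·id of F/N is cyclic, of order p^{p(p-1)+n}. -/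
/-!
Write `e = p(p-1)` and `R = r^n`. Since `r` generates the units modulo `p^2`, lifting the exponent
gives `r^e = 1 + p^2 a` with `a` prime to `p` (`r_pow_lte`), and since `p^{e+n} ∣ i - p` it gives
`r^m = R (1 + p^2 a) (1 + p^{e+n+1} b)` with `b ∈ ℤ_(p)` (`r_zpow_sub_one`).

A vector `(c₀, c₁)` lies in `N` iff `p^n ∣ c₀` and
`p^{n+e} ∣ c₁ - c₀ u (p^e - 1) / p^2` (`mem_N_iff`); stability of `N` under `Ψ` is read off from
this. Applied to `(Ψ - r^m)(α x + β y)`, the second quantity divided by `p^{n+e}` equals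
`u R w (α / p^n)` up to an element of `ℤ_(p)`, where
`w = a + p^{e+n-1} b (1 + p^2 a) - p^{n-1} b (1 + p^2 a)`. As `n ≥ 2`, `w ≡ a` modulo `p`, so `w` is
a unit, and `α x + β y` represents an element of the kernel iff `p^n ∣ α` (`core_iff`).
Modulo `N` the element `p^n x` is a multiple of `y`, so the kernel is generated by the class of
`y`, whose order is `p^{n+e}` (`ker_equiv`).
-/

set_option synthInstance.maxHeartbeats 1000000
set_option maxHeartbeats 1000000

noncomputable section

/-- The `p`-adic valuation of an integer, valued in `ℕ∞`, with `ν_p 0 = ⊤`. -/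
def nuE (p : ℕ) (x : ℤ) : ℕ∞ :=
  if x = 0 then ⊤ else (padicValInt p x : ℕ∞)

/-- The localization `ℤ_(p)` of the integers at the prime `p`, realized as the subring
of `ℚ` consisting of fractions whose denominator is prime to `p`. -/
def ZLoc (p : ℕ) [hp : Fact p.Prime] : Subring ℚ where
  carrier := {q : ℚ | ¬ (p : ℕ) ∣ q.den}
  zero_mem' := by simp [Rat.den_zero, Nat.dvd_one, hp.out.ne_one]
  one_mem' := by simp [Rat.den_one, Nat.dvd_one, hp.out.ne_one]
  add_mem' := by
    intro a b ha hb hd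
    rcases (Nat.Prime.dvd_mul hp.out).mp (hd.trans (Rat.add_den_dvd a b)) with h | h
    · exact ha h
    · exact hb h
  mul_mem' := by
    intro a b ha hb hd
    rcases (Nat.Prime.dvd_mul hp.out).mp (hd.trans (Rat.mul_den_dvd a b)) with h | h
    · exact ha h
    · exact hb h
  neg_mem' := by
    intro a ha hd
    rw [Rat.neg_den] at hd
    exact ha hd

/-- The free `ℤ_(p)`-module on two generators `x = ![1,0]`, `y = ![0,1]`,
realized as a lattice in `ℚ²`. -/
def latt2 (p : ℕ) [Fact p.Prime] : Submodule (ZLoc p) (Fin 2 → ℚ) :=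
  Submodule.span (ZLoc p) {![1, 0], ![0, 1]}

section

variable {p : ℕ} [hp : Fact p.Prime]

/-! ### Arithmetic in `ℤ_(p)` -/

lemma ZLoc.natPow_mem (k : ℕ) : (p : ℚ) ^ k ∈ ZLoc p := pow_mem (natCast_mem _ _) _

lemma ZLoc.inv_intCast_mem {k : ℤ} (hk : ¬ (p : ℤ) ∣ k) : (k : ℚ)⁻¹ ∈ ZLoc p := by
  change ¬ p ∣ ((k : ℚ)⁻¹).den
  rw [Rat.inv_intCast_den]
  split_ifs with h
  · simp [h] at hk
  · rwa [← Int.natCast_dvd]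

/-- The ring `ℤ_(p)` is local with maximal ideal `(p)`, so `1 + p q` is a unit. -/
lemma ZLoc.inv_one_add_mem {q : ℚ} (hq : q ∈ ZLoc p) : (1 + p * q)⁻¹ ∈ ZLoc p := by
  have hden : ¬ (p : ℤ) ∣ (q.den : ℤ) := by
    rw [Int.natCast_dvd_natCast]; exact hq
  have h0 : (q.den : ℚ) ≠ 0 := by exact_mod_cast q.den_nz
  have h1 : ¬ (p : ℤ) ∣ (q.den + p * q.num : ℤ) := fun h =>
    hden ((Int.dvd_add_left (dvd_mul_right _ _)).mp h)
  have h2 : (1 + p * q)⁻¹ = (q.den : ℚ) * ((q.den + p * q.num : ℤ) : ℚ)⁻¹ := by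
    have : ((q.den + p * q.num : ℤ) : ℚ) = q.den * (1 + p * q) := by
      push_cast
      rw [← Rat.den_mul_eq_num q]; ring
    rw [this, mul_inv, ← mul_assoc, mul_inv_cancel₀ h0, one_mul]
  rw [h2]
  exact mul_mem (natCast_mem _ _) (ZLoc.inv_intCast_mem h1)

lemma ZLoc.coprime_den {q : ℚ} (hq : q ∈ ZLoc p) (K : ℕ) :
    IsCoprime ((p : ℤ) ^ K) (q.den : ℤ) := by
  apply IsCoprime.pow_left
  rw [Nat.isCoprime_iff_coprime]
  exact (Nat.Prime.coprime_iff_not_dvd hp.out).mpr hq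

lemma ZLoc.intCast_div_mem_iff (k : ℤ) (K : ℕ) :
    (k : ℚ) / p ^ K ∈ ZLoc p ↔ (p : ℤ) ^ K ∣ k := by
  have hp0 : (p : ℚ) ≠ 0 := by exact_mod_cast hp.out.ne_zero
  constructor
  · intro h
    set q : ℚ := (k : ℚ) / p ^ K with hq
    have h1 : k * q.den = (p : ℤ) ^ K * q.num := by
      have : (k : ℚ) * q.den = (p : ℚ) ^ K * q.num := by
        rw [← Rat.den_mul_eq_num q, hq]; field_simp
      exact_mod_cast this
    exact (ZLoc.coprime_den h K).dvd_of_dvd_mul_right (Dvd.intro _ h1.symm)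
  · rintro ⟨c, rfl⟩
    have : (((p : ℤ) ^ K * c : ℤ) : ℚ) / p ^ K = c := by push_cast; field_simp
    rw [this]; exact intCast_mem _ _

/-- The integers surject onto `ℤ_(p) / p^K`. -/
lemma ZLoc.exists_int_approx {q : ℚ} (hq : q ∈ ZLoc p) (K : ℕ) :
    ∃ k : ℤ, (q - k) / p ^ K ∈ ZLoc p := by
  have hp0 : (p : ℚ) ≠ 0 := by exact_mod_cast hp.out.ne_zero
  obtain ⟨s, t, hst⟩ := ZLoc.coprime_den hq K
  refine ⟨q.num * t, ?_⟩
  have h : (q - (q.num * t : ℤ)) / p ^ K = q * s := by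
    have hst' : (s : ℚ) * p ^ K + t * q.den = 1 := by exact_mod_cast hst
    push_cast
    rw [← Rat.den_mul_eq_num q]
    field_simp
    linear_combination (-q) * hst'
  rw [h]
  exact mul_mem hq (intCast_mem _ _)

/-! ### Powers of the generator `r` -/

/-- The unit `-1 ≠ 1` modulo `p^2` is a power of `r`, so `p ∤ r`. -/
lemma r_coprime {r : ℤ}
    (hr : ∀ v : (ZMod (p ^ 2))ˣ, ∃ j : ℕ, (v : ZMod (p ^ 2)) = (r : ZMod (p ^ 2)) ^ j)
    (hodd : Odd p) : ¬ (p : ℤ) ∣ r := by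
  intro h
  have hp3 : 2 < p := by
    rcases hp.out.eq_two_or_odd' with h | _
    · subst h; exact absurd hodd (by decide)
    · have := hp.out.two_le
      rcases this.lt_or_eq with h | h
      · exact h
      · subst h; exact absurd hodd (by decide)
  have : Fact (2 < p ^ 2) := ⟨by nlinarith⟩
  obtain ⟨j, hj⟩ := hr (-1)
  have h1 : ((-1 : ℤ) : ZMod (p ^ 2)) = ((r ^ j : ℤ) : ZMod (p ^ 2)) := by
    push_cast; simpa using hj
  rcases Nat.eq_zero_or_pos j with rfl | hjp
  · rw [pow_zero] at hj
    simp only [Units.val_neg, Units.val_one] at hj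
    exact ZMod.neg_one_ne_one hj
  · rw [ZMod.intCast_eq_intCast_iff_dvd_sub] at h1
    have h2 : (p : ℤ) ∣ r ^ j - -1 := by
      refine dvd_trans ?_ h1
      push_cast; exact dvd_pow_self _ two_ne_zero
    have h3 : (p : ℤ) ∣ r ^ j := h.trans (dvd_pow_self _ hjp.ne')
    have h4 : (p : ℤ) ∣ 1 := by
      have := dvd_sub h2 h3
      simpa using this
    have := Int.le_of_dvd one_pos h4
    omega

/-- If `p^2` divided `r^{p-1} - 1`, the unit group modulo `p^2`, generated by `r`, would have order
at most `p - 1`. -/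
lemma r_pow_emultiplicity {r : ℤ}
    (hr : ∀ v : (ZMod (p ^ 2))ˣ, ∃ j : ℕ, (v : ZMod (p ^ 2)) = (r : ZMod (p ^ 2)) ^ j)
    (hodd : Odd p) : emultiplicity (p : ℤ) (r ^ (p - 1) - 1) = 1 := by
  have hc := r_coprime hr hodd
  have h1 : (p : ℤ) ∣ r ^ (p - 1) - 1 := by
    have := Int.ModEq.pow_card_sub_one_eq_one hp.out
      ((Nat.prime_iff_prime_int.mp hp.out).coprime_iff_not_dvd.mpr hc).symm
    exact this.symm.dvd
  refine emultiplicity_eq_coe.mpr ⟨by simpa using h1, fun h2 => ?_⟩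
  have h2' : (r : ZMod (p ^ 2)) ^ (p - 1) = 1 := by
    have := (ZMod.intCast_eq_intCast_iff_dvd_sub 1 (r ^ (p - 1)) (p ^ 2)).mpr
      (by push_cast; simpa using h2)
    push_cast at this; exact this.symm
  have hp2 := hp.out.two_le
  let ru : (ZMod (p ^ 2))ˣ := Units.ofPowEqOne _ (p - 1) h2' (by omega)
  have hgen : ∀ v, v ∈ Subgroup.zpowers ru := by
    intro v
    obtain ⟨j, hj⟩ := hr v
    exact ⟨j, Units.ext (by simpa [ru] using hj.symm)⟩
  have hord := orderOf_eq_card_of_forall_mem_zpowers hgen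
  have hdvd : orderOf ru ∣ p - 1 := orderOf_dvd_of_pow_eq_one (Units.ext (by simp [ru]))
  rw [hord, Nat.card_eq_fintype_card, ZMod.card_units_eq_totient,
    Nat.totient_prime_pow hp.out two_pos] at hdvd
  have := Nat.le_of_dvd (by omega) hdvd
  norm_num at this
  nlinarith [Nat.sub_pos_of_lt hp.out.one_lt]

/-- Lifting the exponent: `ν_p(r^{p^K (p-1)} - 1) = K + 1`. -/
lemma r_pow_lte {r : ℤ}
    (hr : ∀ v : (ZMod (p ^ 2))ˣ, ∃ j : ℕ, (v : ZMod (p ^ 2)) = (r : ZMod (p ^ 2)) ^ j)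
    (hodd : Odd p) (K : ℕ) :
    ∃ a : ℤ, ¬ (p : ℤ) ∣ a ∧ r ^ (p ^ K * (p - 1)) - 1 = (p : ℤ) ^ (K + 1) * a := by
  have hm := r_pow_emultiplicity hr hodd
  have h1 : (p : ℤ) ∣ r ^ (p - 1) - 1 := by
    have := pow_dvd_of_le_emultiplicity (k := 1) (le_of_eq hm.symm)
    simpa using this
  have h2 : ¬ (p : ℤ) ∣ r ^ (p - 1) := fun h => r_coprime hr hodd
    ((Nat.prime_iff_prime_int.mp hp.out).dvd_of_dvd_pow h)
  have h3 := Int.emultiplicity_pow_sub_pow hp.out hodd (x := r ^ (p - 1)) (y := 1) h1 h2 (p ^ K)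
  have h4 : emultiplicity (p : ℕ) (p ^ K) = K :=
    emultiplicity_pow_self_of_prime hp.out.prime K
  rw [hm, h4, one_pow, ← pow_mul, mul_comm (p - 1)] at h3
  have h5 := emultiplicity_eq_coe (n := K + 1) |>.mp (h3.trans (by push_cast; ring))
  obtain ⟨⟨a, ha⟩, hn⟩ := h5
  refine ⟨a, fun ⟨c, hc⟩ => hn ⟨c, ?_⟩, ha⟩
  rw [ha, hc]; ring

lemma r_zpow_sub_one {r : ℤ}
    (hr : ∀ v : (ZMod (p ^ 2))ˣ, ∃ j : ℕ, (v : ZMod (p ^ 2)) = (r : ZMod (p ^ 2)) ^ j)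
    (hodd : Odd p) (K : ℕ) (k : ℤ) :
    ∃ b ∈ ZLoc p, ((r : ℚ) ^ (p ^ K * (p - 1))) ^ k = 1 + (p : ℚ) ^ (K + 1) * b := by
  have hc := r_coprime hr hodd
  have hr0 : (r : ℚ) ≠ 0 := by
    intro h; exact hc (by simp [show r = 0 by exact_mod_cast h])
  obtain ⟨a, -, ha⟩ := r_pow_lte hr hodd K
  have hnat : ∀ j : ℕ, ∃ c : ℤ, ((r : ℚ) ^ (p ^ K * (p - 1))) ^ j = 1 + (p : ℚ) ^ (K + 1) * c := by
    intro j
    obtain ⟨d, hd⟩ := sub_one_dvd_pow_sub_one (r ^ (p ^ K * (p - 1))) j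
    refine ⟨a * d, ?_⟩
    rw [ha] at hd
    have : ((r : ℚ) ^ (p ^ K * (p - 1))) ^ j - 1 = (p : ℚ) ^ (K + 1) * a * d := by exact_mod_cast hd
    push_cast; linear_combination this
  obtain ⟨j, rfl | rfl⟩ := Int.eq_nat_or_neg k
  · obtain ⟨c, h⟩ := hnat j
    exact ⟨c, intCast_mem _ _, by rw [zpow_natCast, h]⟩
  · obtain ⟨c, h⟩ := hnat j
    have hne : ((r : ℚ) ^ (p ^ K * (p - 1))) ^ j ≠ 0 := by positivity
    refine ⟨-c * (((r : ℚ) ^ (p ^ K * (p - 1))) ^ j)⁻¹, ?_, ?_⟩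
    · refine mul_mem (neg_mem (intCast_mem _ _)) ?_
      rw [← inv_pow, ← inv_pow]
      exact pow_mem (pow_mem (ZLoc.inv_intCast_mem hc) _) _
    · rw [zpow_neg, zpow_natCast]
      field_simp
      rw [h]; ring

/-! ### Membership in the lattices -/

lemma mem_latt2_iff (v : Fin 2 → ℚ) : v ∈ latt2 p ↔ v 0 ∈ ZLoc p ∧ v 1 ∈ ZLoc p := by
  rw [latt2, Submodule.mem_span_pair]
  constructor
  · rintro ⟨a, b, rfl⟩
    simp [Subring.smul_def]
  · rintro ⟨h0, h1⟩
    refine ⟨⟨v 0, h0⟩, ⟨v 1, h1⟩, ?_⟩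
    ext i; fin_cases i <;> simp [Subring.smul_def]

/-- Subtracting from `v` the multiple `v 0 / p ^ n` of the second generator leaves a multiple
of the first one. -/
lemma mem_N_iff (u : ZLoc p) (n e : ℕ) (hn : 2 ≤ n) (v : Fin 2 → ℚ) :
    v ∈ Submodule.span (ZLoc p)
      {![0, (p : ℚ) ^ (n + e)],
       ![(p : ℚ) ^ n, (u : ℚ) * (p : ℚ) ^ (n - 2) * ((p : ℚ) ^ e - 1)]} ↔
    v 0 / p ^ n ∈ ZLoc p ∧
      (v 1 - v 0 * u * ((p : ℚ) ^ e - 1) / p ^ 2) / p ^ (n + e) ∈ ZLoc p := by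
  have hp0 : (p : ℚ) ≠ 0 := by exact_mod_cast hp.out.ne_zero
  obtain ⟨n, rfl⟩ := Nat.exists_eq_add_of_le' hn
  rw [Submodule.mem_span_pair]
  constructor
  · rintro ⟨a, b, rfl⟩
    constructor
    · convert b.2 using 1
      simp [Subring.smul_def, hp0]
    · convert a.2 using 1
      simp only [Subring.smul_def, Pi.add_apply, Pi.smul_apply, Matrix.cons_val_zero,
        Matrix.cons_val_one, smul_eq_mul, Nat.add_sub_cancel]
      field_simp
      ring
  · rintro ⟨h0, h1⟩
    refine ⟨⟨_, h1⟩, ⟨_, h0⟩, ?_⟩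
    ext i; fin_cases i
    · simp [Subring.smul_def, hp0]
    · simp only [Subring.smul_def, Pi.add_apply, Pi.smul_apply, Matrix.cons_val_zero,
        Matrix.cons_val_one, smul_eq_mul, Nat.add_sub_cancel, Fin.mk_one]
      field_simp
      ring

/-! ### The kernel -/

/-- The unit occurring in the `y`-coordinate of `Ψ - r^m` modulo `N`; its first term is the
`p`-adic unit `a = (r^{p(p-1)} - 1) / p^2`, and the others are divisible by `p`. -/
lemma inv_core_mem {a : ℤ} (ha : ¬ (p : ℤ) ∣ a) {b : ℚ} (hb : b ∈ ZLoc p) (n e : ℕ) :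
    (a + p ^ (e + n + 1) * b * (1 + p ^ 2 * a) - p ^ (n + 1) * b * (1 + p ^ 2 * a) : ℚ) ≠ 0 ∧
    (a + p ^ (e + n + 1) * b * (1 + p ^ 2 * a) - p ^ (n + 1) * b * (1 + p ^ 2 * a) : ℚ)⁻¹
      ∈ ZLoc p := by
  have hp0 : (p : ℚ) ≠ 0 := by exact_mod_cast hp.out.ne_zero
  have ha0 : (a : ℚ) ≠ 0 := by
    intro h; exact ha (by simp [show a = 0 by exact_mod_cast h])
  have hai := ZLoc.inv_intCast_mem ha
  set q : ℚ := (a : ℚ)⁻¹ * b * (1 + p ^ 2 * a) * (p ^ (e + n) - p ^ n) with hq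
  have hqm : q ∈ ZLoc p :=
    mul_mem (mul_mem (mul_mem hai hb) (add_mem (one_mem _)
      (mul_mem (ZLoc.natPow_mem _) (intCast_mem _ _))))
      (sub_mem (ZLoc.natPow_mem _) (ZLoc.natPow_mem _))
  have heq : (a + p ^ (e + n + 1) * b * (1 + p ^ 2 * a) - p ^ (n + 1) * b * (1 + p ^ 2 * a) : ℚ)
      = a * (1 + p * q) := by
    rw [hq]; field_simp; ring
  rw [heq]
  refine ⟨mul_ne_zero ha0 fun h => ?_, ?_⟩
  · -- `1 + p q = 0` would make `p` invertible in `ℤ_(p)`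
    have h1 : ((1 : ℤ) : ℚ) / p ^ 1 ∈ ZLoc p := by
      have : ((1 : ℤ) : ℚ) / p ^ 1 = -q := by
        push_cast; field_simp; linear_combination h
      rw [this]; exact neg_mem hqm
    rw [ZLoc.intCast_div_mem_iff, pow_one] at h1
    exact (Nat.prime_iff_prime_int.mp hp.out).not_dvd_one h1
  · rw [mul_inv]
    exact mul_mem hai (ZLoc.inv_one_add_mem hqm)

/-- The coordinates of `(Ψ - r^m)(α x + β y)` satisfy the membership criterion for `N` exactly
when `p^n ∣ α`. Here `R = r^n`, `r^{p(p-1)} = 1 + p^2 a` and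
`r^m = R (1 + p^2 a) (1 + p^{e+n+1} b)`. -/
lemma core_iff {a : ℤ} (ha : ¬ (p : ℤ) ∣ a) {b : ℚ} (hb : b ∈ ZLoc p) (n e : ℕ) (hn : 2 ≤ n)
    {R u : ℚ} (hR : R ∈ ZLoc p) (hRi : R⁻¹ ∈ ZLoc p) (hR0 : R ≠ 0)
    (hu : u ∈ ZLoc p) (hui : u⁻¹ ∈ ZLoc p) (hu0 : u ≠ 0) {α β c₀ c₁ : ℚ} (hβ : β ∈ ZLoc p)
    (h₀ : c₀ = R * α - R * (1 + p ^ 2 * a) * (1 + p ^ (e + n + 1) * b) * α)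
    (h₁ : c₁ = u / p ^ 2 * R * (p ^ 2 * a) * α + R * (1 + p ^ 2 * a) * β
      - R * (1 + p ^ 2 * a) * (1 + p ^ (e + n + 1) * b) * β) :
    (c₀ / p ^ n ∈ ZLoc p ∧ (c₁ - c₀ * u * ((p : ℚ) ^ e - 1) / p ^ 2) / p ^ (n + e) ∈ ZLoc p) ↔
      α / p ^ n ∈ ZLoc p := by
  have hp0 : (p : ℚ) ≠ 0 := by exact_mod_cast hp.out.ne_zero
  obtain ⟨n, rfl⟩ := Nat.exists_eq_add_of_le' hn
  obtain ⟨hw0, hwi⟩ := inv_core_mem ha hb n e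
  set w : ℚ :=
    a + p ^ (e + n + 1) * b * (1 + p ^ 2 * a) - p ^ (n + 1) * b * (1 + p ^ 2 * a) with hw
  have hA : (1 + p ^ 2 * a : ℚ) ∈ ZLoc p :=
    add_mem (one_mem _) (mul_mem (ZLoc.natPow_mem _) (intCast_mem _ _))
  have hwm : w ∈ ZLoc p :=
    sub_mem (add_mem (intCast_mem _ _) (mul_mem (mul_mem (ZLoc.natPow_mem _) hb) hA))
      (mul_mem (mul_mem (ZLoc.natPow_mem _) hb) hA)
  have e1 : (c₁ - c₀ * u * ((p : ℚ) ^ e - 1) / p ^ 2) / p ^ (n + 2 + e)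
      = u * R * w * (α / p ^ (n + 2)) - R * (1 + p ^ 2 * a) * p ^ 1 * b * β := by
    rw [h₀, h₁, hw]
    field_simp
    ring
  have hy : R * (1 + p ^ 2 * a) * p ^ 1 * b * β ∈ ZLoc p :=
    mul_mem (mul_mem (mul_mem (mul_mem hR hA) (ZLoc.natPow_mem _)) hb) hβ
  rw [e1]
  constructor
  · rintro ⟨-, h⟩
    have h2 := mul_mem (mul_mem (mul_mem hui hRi) hwi) (add_mem h hy)
    convert h2 using 1
    field_simp
    ring
  · intro h
    refine ⟨?_, sub_mem (mul_mem (mul_mem (mul_mem hu hR) hwm) h) hy⟩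
    have : c₀ / p ^ (n + 2) = (R - R * (1 + p ^ 2 * a) * (1 + p ^ (e + (n + 2) + 1) * b))
        * (α / p ^ (n + 2)) := by rw [h₀]; ring
    rw [this]
    exact mul_mem (sub_mem hR (mul_mem (mul_mem hR hA) (add_mem (one_mem _)
      (mul_mem (ZLoc.natPow_mem _) hb)))) h

/-- Let `f` be an endomorphism of `F / N` killing the class of `v` exactly when `p^n ∣ v 0`, where
`N` is given by the criterion of `mem_N_iff`. Then the kernel of `f` is generated by the class of
`y`, because `p^n x` is a multiple of `y` modulo `N`, and that class has order `p^{n+e}`. -/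
lemma ker_equiv (u : ZLoc p) (n e : ℕ) (hn : 2 ≤ n) (N : Submodule (ZLoc p) (Fin 2 → ℚ))
    (hN : ∀ v, v ∈ N ↔ v 0 / p ^ n ∈ ZLoc p ∧
      (v 1 - v 0 * u * ((p : ℚ) ^ e - 1) / p ^ 2) / p ^ (n + e) ∈ ZLoc p)
    (f : (↥(latt2 p) ⧸ Submodule.comap (latt2 p).subtype N) →ₗ[ZLoc p]
            (↥(latt2 p) ⧸ Submodule.comap (latt2 p).subtype N))
    (hf : ∀ v : latt2 p, f (Submodule.Quotient.mk v) = 0 ↔ v.1 0 / p ^ n ∈ ZLoc p) :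
    Nonempty (↥(LinearMap.ker f) ≃+ ZMod (p ^ (e + n))) := by
  have hp0 : (p : ℚ) ≠ 0 := by exact_mod_cast hp.out.ne_zero
  let y : latt2 p := ⟨![0, 1], (mem_latt2_iff _).mpr ⟨by simp, by simp⟩⟩
  let Y : LinearMap.ker f := ⟨Submodule.Quotient.mk y, by
    rw [LinearMap.mem_ker, hf]; simp [y]⟩
  let g : ℤ →+ LinearMap.ker f := (zmultiplesHom _) Y
  have hg : ∀ k : ℤ, (g k : ↥(latt2 p) ⧸ Submodule.comap (latt2 p).subtype N)
      = Submodule.Quotient.mk (k • y) := fun k => rfl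
  have hky : ∀ k : ℤ, ((k • y : latt2 p) : Fin 2 → ℚ) = ![0, (k : ℚ)] := by
    intro k
    ext i; fin_cases i <;> simp [y]
  have hker : g.ker = AddSubgroup.zmultiples ((p ^ (e + n) : ℕ) : ℤ) := by
    ext k
    rw [AddMonoidHom.mem_ker, Int.mem_zmultiples_iff, ← Subtype.coe_inj, hg, ZeroMemClass.coe_zero,
      Submodule.Quotient.mk_eq_zero, Submodule.mem_comap, Submodule.subtype_apply, hky, hN]
    push_cast
    rw [← ZLoc.intCast_div_mem_iff]
    simp [add_comm]
  have hsurj : Function.Surjective g := by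
    rintro ⟨z, hz⟩
    obtain ⟨v, rfl⟩ := Submodule.Quotient.mk_surjective _ z
    rw [LinearMap.mem_ker, hf] at hz
    obtain ⟨-, hv1⟩ := (mem_latt2_iff _).mp v.2
    obtain ⟨n, rfl⟩ := Nat.exists_eq_add_of_le' hn
    have hm : v.1 1 - v.1 0 * u * ((p : ℚ) ^ e - 1) / p ^ 2 ∈ ZLoc p := by
      have : v.1 0 * u * ((p : ℚ) ^ e - 1) / p ^ 2
          = v.1 0 / p ^ (n + 2) * p ^ n * u * ((p : ℚ) ^ e - 1) := by
        field_simp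
        ring
      rw [this]
      exact sub_mem hv1 (mul_mem (mul_mem (mul_mem hz (ZLoc.natPow_mem _)) u.2)
        (sub_mem (ZLoc.natPow_mem _) (one_mem _)))
    obtain ⟨k, hk⟩ := ZLoc.exists_int_approx hm (n + 2 + e)
    refine ⟨k, Subtype.ext ?_⟩
    rw [hg]
    refine ((Submodule.Quotient.eq _).mpr ?_).symm
    rw [Submodule.mem_comap, Submodule.subtype_apply, Submodule.coe_sub, hky, hN]
    refine ⟨by simpa using hz, ?_⟩
    convert hk using 2
    simp
    ring
  exact ⟨((QuotientAddGroup.quotientKerEquivOfSurjective g hsurj).symm.trans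
    (QuotientAddGroup.quotientAddEquivOfEq hker)).trans
    (Int.quotientZMultiplesNatEquivZMod _)⟩

lemma pow_dvd_of_le_nuE {K : ℕ} {x : ℤ} (h : (K : ℕ∞) ≤ nuE p x) : (p : ℤ) ^ K ∣ x := by
  unfold nuE at h
  split_ifs at h with h0
  · simp [h0]
  · rw [padicValInt_dvd_iff]
    exact Or.inr (by exact_mod_cast h)

end

/-- Davis' Proposition 6.7 (kernel computation for the `α_p`-bundle with `ε = 2`):
if `ν_p(i-p) ≥ p(p-1)+n` and `m = n+(p-1)i`, the kernel of the induced endomorphism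
`Ψ - r^m` of `F/N` is cyclic of order `p^{p(p-1)+n}`. -/
theorem stmt8 (p : ℕ) [Fact p.Prime] (hodd : Odd p) (r : ℤ)
    (hr : ∀ v : (ZMod (p ^ 2))ˣ, ∃ j : ℕ, (v : ZMod (p ^ 2)) = (r : ZMod (p ^ 2)) ^ j)
    (u : ZLoc p) (hu : IsUnit u)
    (n : ℕ) (hn : 2 ≤ n)
    -- `Ψ` is the `ℚ`-linear map with `Ψ(x) = r^n·x + (u/p²)·r^n(r^{p(p-1)}-1)·y`
    -- and `Ψ(y) = r^{n+p(p-1)}·y`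
    (Ψ : (Fin 2 → ℚ) →ₗ[ℚ] (Fin 2 → ℚ))
    (hΨ : Ψ = Matrix.mulVecLin
      !![(r : ℚ) ^ n, 0;
         ((u : ℚ) / (p : ℚ) ^ 2) * (r : ℚ) ^ n * ((r : ℚ) ^ (p * (p - 1)) - 1),
           (r : ℚ) ^ (n + p * (p - 1))])
    -- `N` is the submodule generated by `p^{n+p(p-1)}·y` and
    -- `p^n·x + u·p^{n-2}(p^{p(p-1)}-1)·y`
    (N : Submodule (ZLoc p) (Fin 2 → ℚ))
    (hN : N = Submodule.span (ZLoc p)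
      {![0, (p : ℚ) ^ (n + p * (p - 1))],
       ![(p : ℚ) ^ n, (u : ℚ) * (p : ℚ) ^ (n - 2) * ((p : ℚ) ^ (p * (p - 1)) - 1)]}) :
    N.map (Ψ.restrictScalars (ZLoc p)) ≤ N ∧
    ∀ i m : ℤ, ((p * (p - 1) + n : ℕ) : ℕ∞) ≤ nuE p (i - p) →
      m = n + ((p : ℤ) - 1) * i →
      ∃ φ : (↥(latt2 p) ⧸ Submodule.comap (latt2 p).subtype N) →ₗ[ZLoc p]
            (↥(latt2 p) ⧸ Submodule.comap (latt2 p).subtype N),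
        -- `φ` is the endomorphism of `F/N` induced by `Ψ - r^m·id`
        (∀ v w : ↥(latt2 p), (w : Fin 2 → ℚ) = Ψ (v : Fin 2 → ℚ) - (r : ℚ) ^ m • (v : Fin 2 → ℚ) →
          φ (Submodule.Quotient.mk v) = Submodule.Quotient.mk w) ∧
        Nonempty (↥(LinearMap.ker φ) ≃+ ZMod (p ^ (p * (p - 1) + n))) := by
  have hp : Fact p.Prime := inferInstance
  have hp0 : (p : ℚ) ≠ 0 := by exact_mod_cast hp.out.ne_zero
  set e := p * (p - 1) with he
  have hrc := r_coprime hr hodd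
  have hr0 : (r : ℚ) ≠ 0 := by
    intro h; exact hrc (by simp [show r = 0 by exact_mod_cast h])
  obtain ⟨a, ha, haeq⟩ := r_pow_lte hr hodd 1
  have hA : (r : ℚ) ^ e = 1 + p ^ 2 * a := by
    rw [pow_one, ← he] at haeq
    have : (r : ℚ) ^ e - 1 = p ^ 2 * a := by exact_mod_cast haeq
    linear_combination this
  have hRm : (r : ℚ) ^ n ∈ ZLoc p := pow_mem (intCast_mem _ _) _
  have hRi : ((r : ℚ) ^ n)⁻¹ ∈ ZLoc p := by
    rw [← inv_pow]; exact pow_mem (ZLoc.inv_intCast_mem hrc) _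
  have hAm : (1 + p ^ 2 * a : ℚ) ∈ ZLoc p :=
    add_mem (one_mem _) (mul_mem (ZLoc.natPow_mem _) (intCast_mem _ _))
  obtain ⟨u', huu⟩ := hu
  have hmul : (u : ℚ) * ((u'⁻¹ : (ZLoc p)ˣ) : ZLoc p) = 1 := by
    rw [← huu]; exact_mod_cast congrArg Subtype.val u'.mul_inv
  have hu0 : (u : ℚ) ≠ 0 := left_ne_zero_of_mul_eq_one hmul
  have hui : (u : ℚ)⁻¹ ∈ ZLoc p := by
    rw [inv_eq_of_mul_eq_one_right hmul]; exact Subtype.property _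
  have hN' : ∀ v, v ∈ N ↔ v 0 / p ^ n ∈ ZLoc p ∧
      (v 1 - v 0 * u * ((p : ℚ) ^ e - 1) / p ^ 2) / p ^ (n + e) ∈ ZLoc p := by
    intro v; rw [hN]; exact mem_N_iff u n e hn v
  have hΨ0 : ∀ v, Ψ v 0 = (r : ℚ) ^ n * v 0 := by
    intro v; rw [hΨ]; simp [Matrix.mulVec, dotProduct, Fin.sum_univ_two]
  have hΨ1 : ∀ v, Ψ v 1 = (u : ℚ) / p ^ 2 * r ^ n * (p ^ 2 * a) * v 0
      + r ^ n * (1 + p ^ 2 * a) * v 1 := by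
    intro v; rw [hΨ]
    simp [Matrix.mulVec, dotProduct, Fin.sum_univ_two, pow_add, hA]
  have hstab : ∀ v ∈ N, Ψ v ∈ N := by
    intro v hv
    obtain ⟨h0, h1⟩ := (hN' v).mp hv
    rw [hN', hΨ0, hΨ1]
    constructor
    · rw [mul_div_assoc]; exact mul_mem hRm h0
    · have : ((u : ℚ) / p ^ 2 * r ^ n * (p ^ 2 * a) * v 0 + r ^ n * (1 + p ^ 2 * a) * v 1
          - r ^ n * v 0 * u * ((p : ℚ) ^ e - 1) / p ^ 2) / p ^ (n + e)
          = r ^ n * (1 + p ^ 2 * a) *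
            ((v 1 - v 0 * u * ((p : ℚ) ^ e - 1) / p ^ 2) / p ^ (n + e))
            + u * r ^ n * a * (v 0 / p ^ n) := by
        field_simp
        ring
      rw [this]
      exact add_mem (mul_mem (mul_mem hRm hAm) h1)
        (mul_mem (mul_mem (mul_mem u.2 hRm) (intCast_mem _ _)) h0)
  refine ⟨?_, ?_⟩
  · rintro _ ⟨v, hv, rfl⟩
    exact hstab v hv
  intro i m hi hm
  obtain ⟨k, hk⟩ := pow_dvd_of_le_nuE hi
  obtain ⟨b, hb, hbeq⟩ := r_zpow_sub_one hr hodd (e + n) k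
  have hrm : (r : ℚ) ^ m = r ^ n * (1 + p ^ 2 * a) * (1 + p ^ (e + n + 1) * b) := by
    have hmm : m = (n : ℤ) + (e : ℤ) + ((p ^ (e + n) * (p - 1) : ℕ) : ℤ) * k := by
      rw [hm, he]
      push_cast [Nat.cast_sub hp.out.one_le]
      rw [← he]
      linear_combination ((p : ℤ) - 1) * hk
    rw [hmm, zpow_add₀ hr0, zpow_add₀ hr0, zpow_mul, zpow_natCast, zpow_natCast, zpow_natCast,
      hbeq, hA]
  have hrmm : (r : ℚ) ^ m ∈ ZLoc p := by
    rw [hrm]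
    exact mul_mem (mul_mem hRm hAm) (add_mem (one_mem _) (mul_mem (ZLoc.natPow_mem _) hb))
  let θ : (Fin 2 → ℚ) →ₗ[ZLoc p] (Fin 2 → ℚ) :=
    (Ψ - (r : ℚ) ^ m • LinearMap.id).restrictScalars (ZLoc p)
  have hθ : ∀ v, θ v = Ψ v - (r : ℚ) ^ m • v := fun v => rfl
  have hθF : ∀ v ∈ latt2 p, θ v ∈ latt2 p := by
    intro v hv
    obtain ⟨h0, h1⟩ := (mem_latt2_iff v).mp hv
    rw [mem_latt2_iff, hθ]
    simp only [Pi.sub_apply, Pi.smul_apply, smul_eq_mul, hΨ0, hΨ1]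
    refine ⟨sub_mem (mul_mem hRm h0) (mul_mem hrmm h0),
      sub_mem (add_mem ?_ (mul_mem (mul_mem hRm hAm) h1)) (mul_mem hrmm h1)⟩
    have : (u : ℚ) / p ^ 2 * r ^ n * (p ^ 2 * a) * v 0 = u * r ^ n * a * v 0 := by field_simp
    rw [this]
    exact mul_mem (mul_mem (mul_mem u.2 hRm) (intCast_mem _ _)) h0
  have hθN : ∀ v ∈ N, θ v ∈ N := fun v hv =>
    sub_mem (hstab v hv) (N.smul_mem (⟨_, hrmm⟩ : ZLoc p) hv)
  have hle : Submodule.comap (latt2 p).subtype N ≤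
      (Submodule.comap (latt2 p).subtype N).comap (θ.restrict hθF) :=
    fun v hv => hθN v.1 hv
  refine ⟨Submodule.mapQ _ _ (θ.restrict hθF) hle, ?_, ?_⟩
  · intro v w hw
    refine (Submodule.mapQ_apply _ _ _ _).trans (congrArg _ (Subtype.ext ?_))
    exact hw.symm
  · refine ker_equiv u n e hn N hN' _ fun v => ?_
    refine Iff.trans (b := θ v.1 ∈ N) ?_ ?_
    · exact Submodule.Quotient.mk_eq_zero _
    · rw [hN']
      obtain ⟨h0, h1⟩ := (mem_latt2_iff v.1).mp v.2
      refine core_iff ha hb n e hn hRm hRi (pow_ne_zero _ hr0) u.2 hui hu0 h1 ?_ ?_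
      · rw [hθ, Pi.sub_apply, Pi.smul_apply, smul_eq_mul, hΨ0, hrm]
      · rw [hθ, Pi.sub_apply, Pi.smul_apply, smul_eq_mul, hΨ1, hrm]

end
end

section
/- Let k be an integer with k ≡ 0 or 1 (mod 5) and set m = 4k+1. Then the quotient of the free ℤ_(5)-module on generators x₁₃, x₁₇, x₂₉ by the submodule generated by the six elements 5^29·x₂₉; 5^17·x₁₇ - 5^16(5^12-1)·x₂₉; 5^13·x₁₃ + 4·5^12(5^4-1)·x₁₇ + 2·5^11(1+2·5^4-3·5^16)·x₂₉; (2^29-2^m)·x₂₉; (2^17-2^m)·x₁₇ - (1/5)·2^17(2^12-1)·x₂₉; and (2^13-2^m)·x₁₃ + 12·2^13·x₁₇ + (3/25)·2^14(11-2^16)·x₂₉ is cyclic of order 5³. -/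
/-!
Write `d = 2 ^ m = 2 * 16 ^ k`. Since `16 ^ 5 ≡ 1 (mod 25)`, the hypothesis on `k` gives
`d ≡ 2` or `d ≡ 7 (mod 25)`, so `2 ^ 13 - d = 5 u`, `2 ^ 17 - d = 5 v`, `2 ^ 29 - d = 5 w` with
`u, v, w` units of `ℤ_(5)`. The last three relations thus read
`5 w x₂₉`, `5 v x₁₇ - c x₂₉`, `5 u x₁₃ + K x₁₇ + e x₂₉` with `c`, `K` units, and the unit
`D = c K + 5 v e` makes the functional `(x, y, z) ↦ D x - 5 u c y - 25 u v z` vanish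
on the last two of them and take a value divisible by `125` on the first. Its reduction modulo `125` is onto
`ZMod 125`; inverting the triangular system shows that its kernel is generated by these three
relations (`quot_equiv`). The other three relations have coefficients divisible by `5 ^ 11`, so
they lie in the kernel as well.
-/

set_option synthInstance.maxHeartbeats 1000000
set_option maxHeartbeats 1000000

noncomputable section

instance : Fact (Nat.Prime 5) := ⟨by norm_num⟩

/-- The free `ℤ_(5)`-module on four generators, realized as a lattice in `ℚ⁴`. -/
def latt4 : Submodule (ZLoc 5) (Fin 4 → ℚ) :=
  Submodule.span (ZLoc 5) {![1, 0, 0, 0], ![0, 1, 0, 0], ![0, 0, 1, 0], ![0, 0, 0, 1]}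

/-- The quotient of the free `ℤ_(5)`-module on four generators by the submodule
generated by the relations in `s`. -/
abbrev QuotMod4 (s : Set (Fin 4 → ℚ)) : Type :=
  ↥latt4 ⧸ Submodule.comap latt4.subtype (Submodule.span (ZLoc 5) s)

/-- The free `ℤ_(5)`-module on three generators, realized as a lattice in `ℚ³`. -/
def latt3 : Submodule (ZLoc 5) (Fin 3 → ℚ) :=
  Submodule.span (ZLoc 5) {![1, 0, 0], ![0, 1, 0], ![0, 0, 1]}

/-- The quotient of the free `ℤ_(5)`-module on three generators by the submodule
generated by the relations in `s`. -/
abbrev QuotMod3 (s : Set (Fin 3 → ℚ)) : Type :=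
  ↥latt3 ⧸ Submodule.comap latt3.subtype (Submodule.span (ZLoc 5) s)

lemma mem_ZLoc_iff (x : ℚ) : x ∈ ZLoc 5 ↔ ‖(x : ℚ_[5])‖ ≤ 1 := by
  refine ⟨fun h => Padic.norm_rat_le_one h, fun h => ?_⟩
  have h2 := PadicInt.isUnit_iff.1 (PadicInt.isUnit_den x h)
  change ¬ 5 ∣ x.den
  simpa [Nat.Prime.coprime_iff_not_dvd (Fact.out : Nat.Prime 5)] using h2

@[simp, norm_cast] lemma coe_ofNat_ZLoc (n : ℕ) [n.AtLeastTwo] :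
    ((ofNat(n) : ZLoc 5) : ℚ) = ofNat(n) := rfl

/-- `ℤ_(5)` is local with maximal ideal generated by `5`, so an integer prime to `5` plus a
multiple of `5` is a unit. -/
lemma isUnit_add_five_mul {n : ℤ} (hn : ¬ (5 : ℤ) ∣ n) (t : ZLoc 5) :
    IsUnit ((n : ZLoc 5) + 5 * t) := by
  have hn1 : ‖(n : ℚ_[5])‖ = 1 := by
    have h1 := Padic.norm_int_le_one (p := 5) n
    have h2 : ‖(n : ℚ_[5])‖ < 1 → (5 : ℤ) ∣ n := fun h =>
      (PadicInt.norm_int_lt_one_iff_dvd (p := 5) n).1 (by simpa [PadicInt.norm_def] using h)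
    exact le_antisymm h1 (not_lt.1 fun h => hn (h2 h))
  have ht := (mem_ZLoc_iff _).1 t.2
  have h5 : ‖(5 : ℚ_[5])‖ = 5⁻¹ := by
    simpa using Padic.norm_p (p := 5)
  have hlt : ‖(5 : ℚ_[5]) * ((t : ℚ) : ℚ_[5])‖ < 1 := by
    rw [norm_mul, h5]; linarith
  have hs : ‖(n : ℚ_[5]) + 5 * ((t : ℚ) : ℚ_[5])‖ = 1 := by
    rw [Padic.add_eq_max_of_ne (by rw [hn1]; exact hlt.ne'), hn1, max_eq_left hlt.le]
  have hmem : ((n : ℚ) + 5 * t)⁻¹ ∈ ZLoc 5 := by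
    rw [mem_ZLoc_iff]
    push_cast
    rw [norm_inv, hs, inv_one]
  refine IsUnit.of_mul_eq_one ⟨_, hmem⟩ (Subtype.ext ?_)
  have h0 : (n : ℚ) + 5 * t ≠ 0 := by
    intro h
    have h' : (((n : ℚ) + 5 * t : ℚ) : ℚ_[5]) = 0 := by rw [h]; simp
    push_cast at h'
    rw [h'] at hs
    simp at hs
  simpa using mul_inv_cancel₀ h0

/-- Reduction modulo `5 ^ 3` on `ℤ_(5)`, defined through the `5`-adic integers. -/
def redMod : ZLoc 5 →+* ZMod (5 ^ 3) :=
  (PadicInt.toZModPow (p := 5) 3).comp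
    (((Rat.castHom ℚ_[5]).comp (ZLoc 5).subtype).codRestrict (PadicInt.subring 5)
      fun x => (mem_ZLoc_iff _).1 x.2)

lemma redMod_eq_zero_iff (x : ZLoc 5) : redMod x = 0 ↔ ∃ t : ZLoc 5, x = 125 * t := by
  constructor
  · intro h
    obtain ⟨z, hz, hzx⟩ : ∃ z : ℤ_[5], PadicInt.toZModPow (p := 5) 3 z = 0 ∧
        (z : ℚ_[5]) = ((x : ℚ) : ℚ_[5]) := ⟨⟨_, (mem_ZLoc_iff _).1 x.2⟩, h, rfl⟩
    rw [← RingHom.mem_ker, PadicInt.ker_toZModPow, Ideal.mem_span_singleton] at hz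
    obtain ⟨y, hy⟩ := hz
    have hyt : ((x : ℚ) : ℚ_[5]) = 125 * (y : ℚ_[5]) := by
      rw [← hzx, hy, PadicInt.coe_mul, PadicInt.coe_pow, PadicInt.coe_natCast]
      norm_num
    have hmem : (x : ℚ) / 125 ∈ ZLoc 5 := by
      rw [mem_ZLoc_iff]
      push_cast
      rw [hyt, mul_div_cancel_left₀ _ (by norm_num)]
      exact y.2
    refine ⟨⟨_, hmem⟩, Subtype.ext ?_⟩
    change (x : ℚ) = 125 * ((x : ℚ) / 125)
    ring
  · rintro ⟨t, rfl⟩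
    rw [map_mul, map_ofNat]
    have : (OfNat.ofNat 125 : ZMod (5 ^ 3)) = 0 := by decide
    rw [this, zero_mul]

lemma mem_latt3 {x : Fin 3 → ℚ} (hx : x ∈ latt3) (i : Fin 3) : x i ∈ ZLoc 5 := by
  refine Submodule.span_induction (p := fun x _ => x i ∈ ZLoc 5) ?_ ?_ ?_ ?_ hx
  · rintro y (rfl | rfl | rfl) <;> fin_cases i <;> simp [zero_mem, one_mem]
  · exact zero_mem _
  · intro x y _ _ hx hy
    exact add_mem hx hy
  · intro a x _ hx
    exact mul_mem a.2 hx

/-- The functional `(a, b, c) ↦ p a + q b + r c` on the lattice, with values in `ℤ_(5)`. -/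
def functional (p q r : ZLoc 5) : latt3 →ₗ[ZLoc 5] ZLoc 5 where
  toFun x := p * ⟨x.1 0, mem_latt3 x.2 0⟩ + q * ⟨x.1 1, mem_latt3 x.2 1⟩
    + r * ⟨x.1 2, mem_latt3 x.2 2⟩
  map_add' x y := by
    apply Subtype.ext
    change (p : ℚ) * (x.1 0 + y.1 0) + q * (x.1 1 + y.1 1) + r * (x.1 2 + y.1 2) =
      (p * x.1 0 + q * x.1 1 + r * x.1 2) + (p * y.1 0 + q * y.1 1 + r * y.1 2)
    ring
  map_smul' a x := by
    apply Subtype.ext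
    change (p : ℚ) * (a * x.1 0) + q * (a * x.1 1) + r * (a * x.1 2) =
      a * (p * x.1 0 + q * x.1 1 + r * x.1 2)
    ring

/-- A functional that takes a unit value `p` on `x₁₃`, takes values in `125 ℤ_(5)` on `s`, and
whose kernel modulo `125` lies in the span of `s`, identifies the quotient with
`ZMod (5 ^ 3)`. -/
lemma equiv_of_functional (s : Set (Fin 3 → ℚ)) (p q r : ZLoc 5) (hp : IsUnit p)
    (hs : ∀ y ∈ s, ∃ t : ZLoc 5, (p : ℚ) * y 0 + q * y 1 + r * y 2 = 125 * t)
    (hker : ∀ a b c t : ZLoc 5, p * a + q * b + r * c = 125 * t →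
      ![(a : ℚ), (b : ℚ), (c : ℚ)] ∈ Submodule.span (ZLoc 5) s) :
    Nonempty (QuotMod3 s ≃+ ZMod (5 ^ 3)) := by
  let : Module (ZLoc 5) (ZMod (5 ^ 3)) := Module.compHom _ redMod
  let ρ : ZLoc 5 →ₗ[ZLoc 5] ZMod (5 ^ 3) :=
    { toFun := redMod
      map_add' := map_add redMod
      map_smul' := fun a x => map_mul redMod a x }
  let f : latt3 →ₗ[ZLoc 5] ZMod (5 ^ 3) := ρ.comp (functional p q r)
  have hspan : ∀ y ∈ Submodule.span (ZLoc 5) s,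
      ∃ t : ZLoc 5, (p : ℚ) * y 0 + q * y 1 + r * y 2 = 125 * t := by
    intro y hy
    refine Submodule.span_induction
      (p := fun y _ => ∃ t : ZLoc 5, (p : ℚ) * y 0 + q * y 1 + r * y 2 = 125 * t)
      hs ⟨0, by simp⟩ ?_ ?_ hy
    · rintro x y _ _ ⟨t, ht⟩ ⟨t', ht'⟩
      refine ⟨t + t', ?_⟩
      simp only [Pi.add_apply, Subring.coe_add]
      linear_combination ht + ht'
    · rintro a x _ ⟨t, ht⟩
      refine ⟨a * t, ?_⟩
      change (p : ℚ) * (a * x 0) + q * (a * x 1) + r * (a * x 2) = 125 * (a * t)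
      linear_combination (a : ℚ) * ht
  have hkf : LinearMap.ker f = Submodule.comap latt3.subtype (Submodule.span (ZLoc 5) s) := by
    ext x
    rw [LinearMap.mem_ker, Submodule.mem_comap]
    change redMod (functional p q r x) = 0 ↔ _
    rw [redMod_eq_zero_iff]
    constructor
    · rintro ⟨t, ht⟩
      have h := hker _ _ _ t ht
      convert h using 1
      ext i
      fin_cases i <;> rfl
    · intro h
      obtain ⟨t, ht⟩ := hspan _ h
      exact ⟨t, Subtype.ext ht⟩
  have hsurj : Function.Surjective f := by
    intro z
    obtain ⟨p', hp'⟩ := hp.exists_right_inv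
    have h1 : (![1, 0, 0] : Fin 3 → ℚ) ∈ latt3 := Submodule.subset_span (by simp)
    let e : latt3 := ⟨_, h1⟩
    refine ⟨((z.val : ZLoc 5) * p') • e, ?_⟩
    rw [map_smul]
    change redMod _ * redMod (functional p q r e) = z
    have he : functional p q r e = p := by
      apply Subtype.ext
      change (p : ℚ) * 1 + q * 0 + r * 0 = p
      ring
    rw [he, ← map_mul, mul_assoc, mul_comm p', hp', mul_one, map_natCast, ZMod.natCast_zmod_val]
  exact ⟨((Submodule.quotEquivOfEq _ _ hkf.symm).trans
    (f.quotKerEquivOfSurjective hsurj)).toAddEquiv⟩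

/-- If `s` contains the three triangular relations, and `u`, `v`, `w`, `D = c * K + 5 * v * e` are
units, the functional with coefficients `D`, `-5 u c`, `-25 u v` has its kernel modulo `125`
generated by these three relations; so the quotient is cyclic of order `125` as soon as all of `s`
lies in that kernel. -/
lemma quot_equiv (s : Set (Fin 3 → ℚ)) (u v w K c e : ZLoc 5) (hu : IsUnit u) (hv : IsUnit v)
    (hw : IsUnit w) (hD : IsUnit (c * K + 5 * v * e))
    (h4 : ![0, 0, 5 * (w : ℚ)] ∈ s) (h5 : ![0, 5 * (v : ℚ), -(c : ℚ)] ∈ s)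
    (h6 : ![5 * (u : ℚ), (K : ℚ), (e : ℚ)] ∈ s)
    (hs : ∀ y ∈ s, ∃ t : ZLoc 5, ((c * K + 5 * v * e : ZLoc 5) : ℚ) * y 0
      + (-(5 * u * c) : ZLoc 5) * y 1 + (-(25 * u * v) : ZLoc 5) * y 2 = 125 * t) :
    Nonempty (QuotMod3 s ≃+ ZMod (5 ^ 3)) := by
  refine equiv_of_functional s _ _ _ hD hs ?_
  intro a b d t h
  obtain ⟨u', hu'⟩ := hu.exists_right_inv
  obtain ⟨v', hv'⟩ := hv.exists_right_inv
  obtain ⟨w', hw'⟩ := hw.exists_right_inv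
  obtain ⟨D', hD'⟩ := hD.exists_right_inv
  -- The coefficients solve `α r₆ + β r₅ + γ r₄ = (a, b, d)`; `h` says that `5 u` divides `a`.
  have key : ![(a : ℚ), (b : ℚ), (d : ℚ)] =
      ((c * b + 5 * v * d + 25 * t * u') * D') • ![5 * (u : ℚ), (K : ℚ), (e : ℚ)]
      + ((e * b - K * d - 5 * t * K * u' * v') * D') • ![0, 5 * (v : ℚ), -(c : ℚ)]
      + (-(t * u' * v' * w')) • ![0, 0, 5 * (w : ℚ)] := by
    have E0 : a = ((c * b + 5 * v * d + 25 * t * u') * D') * (5 * u) := by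
      linear_combination (-a) * hD' + D' * h - 125 * t * D' * hu'
    have E1 : b = ((c * b + 5 * v * d + 25 * t * u') * D') * K
        + ((e * b - K * d - 5 * t * K * u' * v') * D') * (5 * v) := by
      linear_combination (-b) * hD' + 25 * t * K * u' * D' * hv'
    have E2 : d = ((c * b + 5 * v * d + 25 * t * u') * D') * e
        + ((e * b - K * d - 5 * t * K * u' * v') * D') * (-c)
        + (-(t * u' * v' * w')) * (5 * w) := by
      linear_combination (-d - 5 * t * u' * v') * hD' + 25 * t * u' * D' * e * hv'
        + 5 * t * u' * v' * hw'
    have F0 := congrArg (Subtype.val) E0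
    have F1 := congrArg (Subtype.val) E1
    have F2 := congrArg (Subtype.val) E2
    ext i
    fin_cases i
    · refine F0.trans ?_
      simp [Subring.smul_def]
    · refine F1.trans ?_
      simp [Subring.smul_def]
    · refine F2.trans ?_
      simp [Subring.smul_def]
  rw [key]
  exact add_mem (add_mem (Submodule.smul_mem _ _ (Submodule.subset_span h6))
    (Submodule.smul_mem _ _ (Submodule.subset_span h5)))
    (Submodule.smul_mem _ _ (Submodule.subset_span h4))

/-- Because `16 ^ 5 ≡ 1 (mod 25)`, so is every integral power of `16 ^ 5`. -/
lemma pow_congr (j : ℤ) : ∃ t : ZLoc 5, ((16 : ℚ) ^ 5) ^ j = 1 + 25 * t := by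
  have hnat : ∀ n : ℕ, ∃ t : ℤ, ((16 : ℤ) ^ 5) ^ n = 1 + 25 * t := by
    intro n
    have h : ((16 : ℤ) ^ 5 - 1) ∣ ((16 : ℤ) ^ 5) ^ n - 1 := sub_one_dvd_pow_sub_one _ n
    obtain ⟨t, ht⟩ := (show (25 : ℤ) ∣ 16 ^ 5 - 1 by norm_num).trans h
    exact ⟨t, by linarith⟩
  obtain ⟨n, rfl | rfl⟩ := j.eq_nat_or_neg
  · obtain ⟨t, ht⟩ := hnat n
    refine ⟨t, ?_⟩
    rw [zpow_natCast]
    have ht' := congrArg (Int.cast : ℤ → ℚ) ht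
    push_cast at ht' ⊢
    exact ht'
  · obtain ⟨t, ht⟩ := hnat n
    have hu := isUnit_add_five_mul (n := 1) (by norm_num) (5 * (t : ZLoc 5))
    obtain ⟨y, hy⟩ := hu.exists_right_inv
    have hyt : (1 + 5 * (5 * (t : ℚ))) * y = 1 := by
      have := congrArg Subtype.val hy
      simpa using this
    refine ⟨-(t * y), ?_⟩
    rw [zpow_neg, zpow_natCast]
    have ht' : ((16 : ℚ) ^ 5) ^ n = 1 + 25 * t := by
      have := congrArg (Int.cast : ℤ → ℚ) ht
      push_cast at this
      exact this
    rw [ht']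
    push_cast
    rw [inv_eq_of_mul_eq_one_right (b := (y : ℚ)) (by linear_combination hyt)]
    linear_combination hyt

/-- Modulo `25`, `2 ^ (4 * k + 1) = 2 * 16 ^ k` is `2` for `k ≡ 0` and `7` for `k ≡ 1 (mod 5)`. -/
lemma two_zpow_congr (k : ℤ) (hk : (5 : ℤ) ∣ k ∨ (5 : ℤ) ∣ k - 1) :
    ∃ (n : ℤ) (t : ZLoc 5), (n = 0 ∨ n = 1) ∧ (2 : ℚ) ^ (4 * k + 1) = 2 + 5 * n + 25 * t := by
  rcases hk with ⟨j, hj⟩ | ⟨j, hj⟩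
  · obtain ⟨t, ht⟩ := pow_congr j
    refine ⟨0, 2 * t, Or.inl rfl, ?_⟩
    have h : (2 : ℚ) ^ (4 * k + 1) = ((16 : ℚ) ^ 5) ^ j * 2 := by
      rw [zpow_add₀ two_ne_zero, hj, show 4 * (5 * j) = 20 * j by ring, zpow_mul]
      norm_num
    rw [h, ht]
    change (1 + 25 * (t : ℚ)) * 2 = 2 + 5 * ((0 : ℤ) : ℚ) + 25 * (2 * t)
    push_cast
    ring
  · obtain ⟨t, ht⟩ := pow_congr j
    refine ⟨1, 1 + 32 * t, Or.inr rfl, ?_⟩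
    have h : (2 : ℚ) ^ (4 * k + 1) = ((16 : ℚ) ^ 5) ^ j * 32 := by
      rw [show 4 * k + 1 = 20 * j + 5 by omega, zpow_add₀ two_ne_zero, zpow_mul]
      norm_num
    rw [h, ht]
    change (1 + 25 * (t : ℚ)) * 32 = 2 + 5 * ((1 : ℤ) : ℚ) + 25 * (1 + 32 * t)
    push_cast
    ring

/-- The cokernel `C₁₃²⁹` used in the determination of the odd-degree 5-primary
`v₁`-periodic homotopy of `E₈`: for `m = 4k+1` with `k ≡ 0, 1 (mod 5)`, the quotient of
the free `ℤ_(5)`-module on `x₁₃, x₁₇, x₂₉` by the six listed relations is cyclic of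
order `5³`. -/
theorem stmt11 (k : ℤ) (hk : (5 : ℤ) ∣ k ∨ (5 : ℤ) ∣ k - 1) (m : ℤ) (hm : m = 4 * k + 1) :
    Nonempty ((QuotMod3
      {![0, 0, 5 ^ 29],
       ![0, 5 ^ 17, -(5 ^ 16 * (5 ^ 12 - 1))],
       ![5 ^ 13, 4 * 5 ^ 12 * (5 ^ 4 - 1), 2 * 5 ^ 11 * (1 + 2 * 5 ^ 4 - 3 * 5 ^ 16)],
       ![0, 0, 2 ^ 29 - (2 : ℚ) ^ m],
       ![0, 2 ^ 17 - (2 : ℚ) ^ m, -((1 / 5) * 2 ^ 17 * (2 ^ 12 - 1))],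
       ![2 ^ 13 - (2 : ℚ) ^ m, 12 * 2 ^ 13, (3 / 25) * 2 ^ 14 * (11 - 2 ^ 16)]}) ≃+
      ZMod (5 ^ 3)) := by
  obtain ⟨n, t, hn, ht⟩ := two_zpow_congr k hk
  subst hm
  rw [ht]
  -- `8190 = 2 ^ 13 - 2`, `131070 = 2 ^ 17 - 2`, `536870910 = 2 ^ 29 - 2`, each divided by `5`.
  let u : ZLoc 5 := ((1638 - n : ℤ) : ZLoc 5) + 5 * (-t)
  let v : ZLoc 5 := ((26214 - n : ℤ) : ZLoc 5) + 5 * (-t)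
  let w : ZLoc 5 := ((107374182 - n : ℤ) : ZLoc 5) + 5 * (-t)
  let K : ZLoc 5 := ((12 * 2 ^ 13 : ℤ) : ZLoc 5)
  let c : ZLoc 5 := ((2 ^ 17 * 819 : ℤ) : ZLoc 5)
  let e : ZLoc 5 := ((-(3 * 2 ^ 14 * 2621) : ℤ) : ZLoc 5)
  have hu : (u : ℚ) = 1638 - n - 5 * t := by
    change (((1638 - n : ℤ) : ZLoc 5) : ℚ) + 5 * (-t) = _
    push_cast
    ring
  have hv : (v : ℚ) = 26214 - n - 5 * t := by
    change (((26214 - n : ℤ) : ZLoc 5) : ℚ) + 5 * (-t) = _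
    push_cast
    ring
  have hw : (w : ℚ) = 107374182 - n - 5 * t := by
    change (((107374182 - n : ℤ) : ZLoc 5) : ℚ) + 5 * (-t) = _
    push_cast
    ring
  have hK : (K : ℚ) = 12 * 2 ^ 13 := by simp only [K]; push_cast; ring
  have hc : (c : ℚ) = 2 ^ 17 * 819 := by simp only [c]; push_cast; ring
  have he : (e : ℚ) = -(3 * 2 ^ 14 * 2621) := by simp only [e]; push_cast; ring
  refine quot_equiv _ u v w K c e (isUnit_add_five_mul (by omega) _)
    (isUnit_add_five_mul (by omega) _) (isUnit_add_five_mul (by omega) _) ?_ ?_ ?_ ?_ ?_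
  · have h := isUnit_add_five_mul (n := 2 ^ 17 * 819 * (12 * 2 ^ 13)) (by norm_num) (v * e)
    convert h using 1
    simp only [c, K]
    push_cast
    ring
  · rw [hw]
    right; right; right; left
    ext i
    fin_cases i <;> simp
    ring
  · rw [hv, hc]
    right; right; right; right; left
    ext i
    fin_cases i <;> simp <;> ring
  · rw [hu, hK, he]
    right; right; right; right; right
    change _ = _
    ext i
    fin_cases i <;> simp <;> ring
  · -- The functional vanishes on the last two relations.
    rintro y (rfl | rfl | rfl | rfl | rfl | rfl)
    · refine ⟨-(u * v * 5 ^ 28), ?_⟩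
      simp
      ring
    · refine ⟨-(u * c * 5 ^ 15) + u * v * 5 ^ 15 * (5 ^ 12 - 1), ?_⟩
      simp
      ring
    · refine ⟨(c * K + 5 * v * e) * 5 ^ 10 - u * c * (4 * 5 ^ 10 * (5 ^ 4 - 1))
        - u * v * (2 * 5 ^ 10 * (1 + 2 * 5 ^ 4 - 3 * 5 ^ 16)), ?_⟩
      simp
      ring
    · refine ⟨-(u * v * w), ?_⟩
      simp [hw]
      ring
    · refine ⟨0, ?_⟩
      simp [hv, hc]
      ring
    · refine ⟨0, ?_⟩
      simp [hu, hv, hc, hK, he]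
      ring

end
end
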